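/- Majority asymptotically outperforms dictator at weak noise: for every α ∈ [0,1/2) such that 2 ln 2 · (1 − μ(α)) > 1, limsup over odd n → ∞ of [M(Y^n | maj(X^n)) − M(Y^n | dic(X^n))] ≤ −(1 − 2α)^2 · (2 ln 2 · (1 − μ(α)) − 1)/4 < 0. -/

import Mathlib

/-!
Write `p_k = P[maj(X^n) = 1 | Y^k]` for the posterior martingale, with increments `Δp`. Given the
majority bit, the SMSE of `Y_{k+1}` is `1/4 - E[(Δp)² / (4 p (1 - p))]`. Since the binary entropy `h`
(in nats) satisfies `h''(p) = -1 / (p (1 - p))`, the sum of these terms is close to half of the total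
decrease `h(p_0) - E h(p_n)`.

To make this rigorous up to the endpoints of `[0, 1]`, `h` is replaced by the smoothed entropy
`φ(p) = h(η + (1 - 2η) p)`, for which each step costs at most a multiple of `(Δp)⁴`
(`smoothEnt_mid`). When `r` bits remain unobserved, `Δp` is at most the largest atom `≤ 1 / √(r + 1)`
of a binomial law, and the expected increment is controlled by the central binomial probability `ret m`,
where `n = 2m + 1`. As `∑ (r + 1)^(-3/2)` converges, the total error is `O(ret m) = o(1)`
(`smse_post_le`, `martErr_succ`). Jensen's inequality bounds `E φ(p_n)` by `φ(P[maj X ≠ maj Y])`, so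
the SMSE given the majority bit is at most `n/4 - (ln 2 - φ(P[maj X ≠ maj Y])) / 2 + o(1)`
(`noisySMSE_maj_le`).

The probability `P[maj X ≠ maj Y]` is a binomial average, over the number `d` of flipped bits, of
`majErr m d = ∑_{2i < d} ret i * ret (m - i)`. This is the discrete arcsine law; Wallis' product
gives `ret i ≤ 1 / √(π i)` and hence `majErr m d ≤ ret m + (2/π) arcsin √(d/n)` (`majErr_le`). The
convergence of Bernstein polynomials turns this into the limiting bound
`(2/π) arcsin √α = arccos(1 - 2α) / π` (`exists_noise_bound`).

The dictator has SMSE exactly `n/4 - (1 - 2α)²/4` (`noisySMSE_dic`). Letting `η → 0`, the difference is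
asymptotically at most `-ln 2 (1 - μ(α)) / 2 + (1 - 2α)²/4`, which is at most the claimed bound because
`(1 - 2α)² ≤ 1`.
-/

open Finset MeasureTheory

noncomputable section

/-- Conditional probability that coordinate `k` equals `true` given the coordinates
before `k`, under the (possibly unnormalized) pmf `μ` on `{0,1}^n`. -/
def condQ {n : ℕ} (μ : (Fin n → Bool) → ℝ) (k : Fin n) (x : Fin n → Bool) : ℝ :=
  (∑ y ∈ Finset.univ.filter
      (fun y : Fin n → Bool => (∀ i : Fin n, i < k → y i = x i) ∧ y k = true), μ y) /
  (∑ y ∈ Finset.univ.filter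
      (fun y : Fin n → Bool => ∀ i : Fin n, i < k → y i = x i), μ y)

/-- The `k`-th term `E[Q_k (1 - Q_k)]` of the sequential mean squared error. -/
def smseTerm {n : ℕ} (μ : (Fin n → Bool) → ℝ) (k : Fin n) : ℝ :=
  ∑ x : Fin n → Bool, μ x * (condQ μ k x * (1 - condQ μ k x))

/-- The sequential mean squared error `M(U^n) = Σ_k E[Q_k (1 - Q_k)]`. -/
def smse {n : ℕ} (μ : (Fin n → Bool) → ℝ) : ℝ := ∑ k : Fin n, smseTerm μ k

/-- The uniform pmf on `{0,1}^n`. -/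
def unif (n : ℕ) : (Fin n → Bool) → ℝ := fun _ => ((2 : ℝ) ^ n)⁻¹

/-- The SMSE of `μ` given the side information `b` :
`M(X^n | b(X^n)) = Σ_c Σ_k E[Q_k (1-Q_k)]` where `Q_k = P[X_k = 1 | X^{k-1}, b(X^n)]`. -/
def condSMSE {n : ℕ} (μ : (Fin n → Bool) → ℝ) (b : (Fin n → Bool) → Bool) : ℝ :=
  ∑ c : Bool, smse (fun x => if b x = c then μ x else 0)

/-- Hamming weight. -/
def hw {n : ℕ} (x : Fin n → Bool) : ℕ := (Finset.univ.filter (fun i => x i = true)).card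

/-- The majority function: `1` iff the Hamming weight exceeds `n/2`. -/
def majF (n : ℕ) : (Fin n → Bool) → Bool := fun x => decide (n < 2 * hw x)

/-- The joint pmf `y ↦ P[Y^n = y, b(X^n) = c]` where `X^n` is uniform and
`Y^n = X^n ⊕ Z^n` with `Z^n` i.i.d. Bernoulli(α). -/
def noisyPMF (n : ℕ) (α : ℝ) (b : (Fin n → Bool) → Bool) (c : Bool) :
    (Fin n → Bool) → ℝ :=
  fun y => ∑ x : Fin n → Bool,
    if b x = c then ((2 : ℝ) ^ n)⁻¹ * ∏ i : Fin n, (if y i = x i then 1 - α else α) else 0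

/-- The noisy SMSE `M(Y^n | b(X^n))`. -/
def noisySMSE (n : ℕ) (α : ℝ) (b : (Fin n → Bool) → Bool) : ℝ :=
  ∑ c : Bool, smse (noisyPMF n α b c)

/-- The binary entropy function (base 2). -/
def binEnt (p : ℝ) : ℝ := -(p * Real.logb 2 p) - (1 - p) * Real.logb 2 (1 - p)

/-- `μ(α) = h(arccos(1-2α)/π)`. -/
def muF (α : ℝ) : ℝ := binEnt (Real.arccos (1 - 2 * α) / Real.pi)

/-- Base-2 Shannon entropy of a pmf on a finite type. -/
def entropy {β : Type*} [Fintype β] (p : β → ℝ) : ℝ := ∑ x : β, -(p x * Real.logb 2 (p x))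

open scoped Classical in
/-- Pushforward pmf along `f`. -/
def push {β γ : Type*} [Fintype β] (μ : β → ℝ) (f : β → γ) : γ → ℝ :=
  fun c => ∑ x ∈ Finset.univ.filter (fun x => f x = c), μ x

/-- The pmf of a majority random vector: uniform on `{v : w(v) > n/2}`. -/
def majPMF (n : ℕ) : (Fin n → Bool) → ℝ :=
  fun v => if n < 2 * hw v then
    (((Finset.univ.filter (fun u : Fin n → Bool => n < 2 * hw u)).card : ℝ))⁻¹ else 0

/-- Standard Gaussian density. -/
def stdPdf (t : ℝ) : ℝ := Real.exp (-(t ^ 2) / 2) / Real.sqrt (2 * Real.pi)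

/-- Gaussian tail function `Q(u) = P[G > u]`. -/
def gaussQ (u : ℝ) : ℝ := ∫ s in Set.Ioi u, stdPdf s

/-- Base-2 conditional Shannon entropy `H(C | Y)` for the joint pmf `J`. -/
def condEntBool {β : Type*} [Fintype β] (J : β → Bool → ℝ) : ℝ :=
  ∑ y : β, ∑ c : Bool, -(J y c * Real.logb 2 (J y c / (∑ c' : Bool, J y c')))

end

/-! ### Recursion for the SMSE, and the dictator -/

lemma sum_cube_succ {n : ℕ} (F : (Fin (n+1) → Bool) → ℝ) :
    ∑ x, F x = ∑ y : Fin n → Bool, F (Fin.cons true y) + ∑ y : Fin n → Bool, F (Fin.cons false y) := by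
  rw [← (Fin.consEquiv (fun _ : Fin (n+1) => Bool)).sum_comp, Fintype.sum_prod_type, Fintype.sum_bool]
  rfl

lemma condQ_zero {n : ℕ} (ν : (Fin (n+1) → Bool) → ℝ) (x : Fin (n+1) → Bool) :
    condQ ν 0 x = (∑ y, ν (Fin.cons true y)) /
      (∑ y, ν (Fin.cons true y) + ∑ y, ν (Fin.cons false y)) := by
  unfold condQ
  rw [Finset.sum_filter, Finset.sum_filter, sum_cube_succ, sum_cube_succ]
  simp

lemma condQ_succ {n : ℕ} (ν : (Fin (n+1) → Bool) → ℝ) (k : Fin n) (b : Bool) (x : Fin n → Bool) :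
    condQ ν k.succ (Fin.cons b x) = condQ (fun y => ν (Fin.cons b y)) k x := by
  unfold condQ
  simp only [Finset.sum_filter]
  rw [sum_cube_succ, sum_cube_succ]
  cases b <;> simp [Fin.forall_fin_succ]

/-- One-step recursion for the SMSE of a (finite, unnormalised) measure on the cube:
the first bit contributes `T₁ T₀ / (T₁ + T₀)` with `T_b` the mass of `{x | x 0 = b}`, and the
remaining bits contribute the SMSE of the two restrictions. -/
lemma smse_succ {n : ℕ} (ν : (Fin (n+1) → Bool) → ℝ) :
    smse ν = (∑ y, ν (Fin.cons true y)) * (∑ y, ν (Fin.cons false y)) /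
      (∑ y, ν (Fin.cons true y) + ∑ y, ν (Fin.cons false y))
      + smse (fun y => ν (Fin.cons true y)) + smse (fun y => ν (Fin.cons false y)) := by
  unfold smse
  rw [Fin.sum_univ_succ, add_assoc]
  congr 1
  · unfold smseTerm
    simp only [condQ_zero]
    rw [← Finset.sum_mul, sum_cube_succ]
    set a := ∑ y, ν (Fin.cons true y)
    set b := ∑ y, ν (Fin.cons false y)
    by_cases h : a + b = 0
    · simp [h]
    · field_simp
      ring
  · rw [← Finset.sum_add_distrib]
    refine Finset.sum_congr rfl fun k _ => ?_
    unfold smseTerm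
    rw [sum_cube_succ]
    simp only [condQ_succ]

lemma smse_const (n : ℕ) (w : ℝ) : smse (fun _ : Fin n → Bool => w) = w * 2 ^ n * (n / 4) := by
  induction n with
  | zero => simp [smse]
  | succ n ih =>
    rw [smse_succ, ih]
    simp only [Finset.sum_const, Finset.card_univ, Fintype.card_pi, Fintype.card_bool,
      Finset.prod_const, Fintype.card_fin, nsmul_eq_mul]
    by_cases hw : w = 0
    · simp [hw]
    · have : (2:ℝ)^n ≠ 0 := by positivity
      push_cast
      field_simp
      ring

/-- The kernel of the binary symmetric channel: `P[Y^n = y | X^n = x]`. -/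
noncomputable def bsc (n : ℕ) (α : ℝ) (y x : Fin n → Bool) : ℝ := ∏ i : Fin n, (if y i = x i then 1 - α else α)

lemma bsc_cons {n : ℕ} (α : ℝ) (a b : Bool) (y x : Fin n → Bool) :
    bsc (n+1) α (Fin.cons a y) (Fin.cons b x) = (if a = b then 1 - α else α) * bsc n α y x := by
  simp [bsc, Fin.prod_univ_succ]

lemma bsc_nonneg {n : ℕ} {α : ℝ} (h0 : 0 ≤ α) (h1 : α ≤ 1) (y x : Fin n → Bool) :
    0 ≤ bsc n α y x := by
  unfold bsc
  refine Finset.prod_nonneg fun i _ => ?_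
  split_ifs <;> linarith

lemma sum_bsc (n : ℕ) (α : ℝ) (y : Fin n → Bool) : ∑ x, bsc n α y x = 1 := by
  induction n with
  | zero => simp [bsc]
  | succ n ih =>
    obtain ⟨a, y, rfl⟩ : ∃ a z, y = Fin.cons a z := ⟨y 0, Fin.tail y, (Fin.cons_self_tail y).symm⟩
    rw [sum_cube_succ]
    simp only [bsc_cons, ← Finset.mul_sum, ih]
    cases a <;> simp

/-- For the dictator function `M(Y^n | dic(X^n)) = n/4 - (1-2α)²/4`. -/
lemma noisySMSE_dic (n : ℕ) (α : ℝ) (hn : 0 < n) :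
    noisySMSE n α (fun x => x ⟨0, hn⟩) = n / 4 - (1 - 2 * α) ^ 2 / 4 := by
  obtain ⟨n, rfl⟩ : ∃ k, n = k + 1 := ⟨n - 1, by omega⟩
  have key : ∀ c a (y : Fin n → Bool), noisyPMF (n+1) α (fun x => x ⟨0, hn⟩) c (Fin.cons a y) =
      ((2:ℝ)^(n+1))⁻¹ * (if a = c then 1 - α else α) := by
    intro c a y
    unfold noisyPMF
    change ∑ x, (if x 0 = c then ((2:ℝ)^(n+1))⁻¹ * bsc (n+1) α (Fin.cons a y) x else 0) = _
    rw [sum_cube_succ]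
    simp only [bsc_cons, Fin.cons_zero]
    cases c <;> simp [← Finset.mul_sum, sum_bsc]
  unfold noisySMSE
  simp only [Fintype.sum_bool, smse_succ, key, smse_const]
  simp only [Finset.sum_const, Finset.card_univ, Fintype.card_pi, Fintype.card_bool,
      Finset.prod_const, Fintype.card_fin, nsmul_eq_mul]
  have : (2:ℝ)^n ≠ 0 := by positivity
  simp only [if_true, Bool.false_eq_true, Bool.true_eq_false, if_false]
  push_cast
  have e1 : (2:ℝ)^n * ((2 ^ (n+1))⁻¹ * (1-α)) = (1-α)/2 := by rw [pow_succ]; field_simp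
  have e2 : (2:ℝ)^n * ((2 ^ (n+1))⁻¹ * α) = α/2 := by rw [pow_succ]; field_simp
  have e3 : ((2:ℝ) ^ (n+1))⁻¹ * (1-α) * 2^n = (1-α)/2 := by rw [pow_succ]; field_simp
  have e4 : ((2:ℝ) ^ (n+1))⁻¹ * α * 2^n = α/2 := by rw [pow_succ]; field_simp
  rw [e1, e2, e3, e4]
  have e5 : (1-α)/2 + α/2 = 1/2 := by ring
  have e6 : α/2 + (1-α)/2 = 1/2 := by ring
  rw [e5, e6]
  ring

/-! ### Smoothed binary entropy -/

lemma log_one_add_le {u : ℝ} (hu : 0 ≤ u) : Real.log (1 + u) ≤ u - u ^ 2 / 2 + u ^ 3 / 3 := by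
  have hd : ∀ x ∈ Set.Ici (0:ℝ), HasDerivAt (fun x : ℝ => x - x ^ 2 / 2 + x ^ 3 / 3 - Real.log (1 + x))
      (1 - x + x ^ 2 - 1 / (1 + x)) x := by
    intro x hx
    have hx' : (1 + x) ≠ 0 := by have : (0:ℝ) ≤ x := hx; linarith
    have h1 := ((hasDerivAt_id x).const_add 1).log hx'
    have h2 := (((hasDerivAt_id x).sub ((hasDerivAt_pow 2 x).div_const 2)).add
      ((hasDerivAt_pow 3 x).div_const 3)).sub h1
    convert! h2 using 1
    simp
    try ring
  have hm : MonotoneOn (fun x : ℝ => x - x ^ 2 / 2 + x ^ 3 / 3 - Real.log (1 + x)) (Set.Ici 0) := by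
    apply monotoneOn_of_deriv_nonneg (convex_Ici 0)
    · exact fun x hx => (hd x hx).continuousAt.continuousWithinAt
    · exact fun x hx => (hd x (interior_subset hx)).differentiableAt.differentiableWithinAt
    · intro x hx
      have hx0 : (0:ℝ) ≤ x := interior_subset hx
      rw [(hd x hx0).deriv]
      have : 1 - x + x ^ 2 - 1 / (1 + x) = x ^ 3 / (1 + x) := by field_simp; ring
      rw [this]; positivity
  have := hm (Set.mem_Ici.2 le_rfl) (Set.mem_Ici.2 hu) hu
  simp at this
  linarith

lemma log_one_sub_le {u : ℝ} (hu : 0 ≤ u) (hu1 : u < 1) :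
    Real.log (1 - u) ≤ -u - u ^ 2 / 2 - u ^ 3 / 3 := by
  have h := Real.hasSum_pow_div_log_of_abs_lt_one (x := u) (by rw [abs_of_nonneg hu]; exact hu1)
  have := sum_le_hasSum (range 3) (fun i _ => by positivity) h
  simp [Finset.sum_range_succ] at this
  norm_num at this
  linarith

/-- Second-order expansion of `-x log x`, with a quartic error thanks to symmetry. -/
lemma negMulLog_mid {x e : ℝ} (he : 0 ≤ e) (hx : e < x) :
    Real.negMulLog x - (Real.negMulLog (x + e) + Real.negMulLog (x - e)) / 2
      ≤ e ^ 2 / (2 * x) + e ^ 4 / (3 * x ^ 3) := by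
  have hx0 : 0 < x := by linarith
  obtain ⟨u, rfl⟩ : ∃ u, e = x * u := ⟨e / x, by field_simp⟩
  have hu0 : 0 ≤ u := nonneg_of_mul_nonneg_right he hx0
  have hu1 : u < 1 := by by_contra! h; nlinarith
  have e1 : Real.log (x + x * u) = Real.log x + Real.log (1 + u) := by
    rw [← Real.log_mul (by positivity) (by positivity)]; ring_nf
  have e2 : Real.log (x - x * u) = Real.log x + Real.log (1 - u) := by
    rw [← Real.log_mul (by positivity) (by linarith)]; ring_nf
  unfold Real.negMulLog
  rw [e1, e2]
  have l1 := mul_le_mul_of_nonneg_left (log_one_add_le hu0) (by linarith : 0 ≤ 1 + u)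
  have l2 := mul_le_mul_of_nonneg_left (log_one_sub_le hu0 hu1) (by linarith : 0 ≤ 1 - u)
  have l3 : (1 + u) * Real.log (1 + u) + (1 - u) * Real.log (1 - u) ≤ u ^ 2 + 2 / 3 * u ^ 4 := by
    nlinarith
  have l4 := mul_le_mul_of_nonneg_left l3 hx0.le
  have : (x * u) ^ 2 / (2 * x) + (x * u) ^ 4 / (3 * x ^ 3) = x * (u ^ 2 + 2 / 3 * u ^ 4) / 2 := by
    field_simp
    try ring
  rw [this]
  linarith

/-- The entropy (in nats) of a Bernoulli(`p`) bit after passing it through a binary symmetric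
channel with crossover `η`. For `η > 0` this is a smooth function on `[0,1]`, which
avoids the singularities of the entropy function at the endpoints. -/
noncomputable def smoothEnt (η p : ℝ) : ℝ := Real.binEntropy (η + (1 - 2 * η) * p)

/-- One step of the posterior martingale: if the posterior moves from its mean `(a + b) / 2` to `a` or
`b`, each with probability `1/2`, then the SMSE of the observed bit is at most `1/4` minus half the expected
decrease of the smoothed entropy, up to a quartic error. (Both sides are stated multiplied by `2`.) -/
lemma smoothEnt_mid {η a b : ℝ} (hη : 0 < η) (hη' : η < 1 / 2) (hb : 0 ≤ b) (hab : b ≤ a) (ha : a ≤ 1) :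
    a * b / (a + b) + (1 - a) * (1 - b) / (1 - a + (1 - b)) ≤
      1 / 2 - (smoothEnt η ((a + b) / 2) - (smoothEnt η a + smoothEnt η b) / 2)
        + 2 / 3 / η ^ 3 * ((a - b) / 2) ^ 4 := by
  obtain ⟨p, d, rfl, rfl⟩ : ∃ p d, a = p + d ∧ b = p - d :=
    ⟨(a + b) / 2, (a - b) / 2, by ring, by ring⟩
  have hd : 0 ≤ d := by linarith
  rw [show (p + d + (p - d)) / 2 = p by ring, show (p + d - (p - d)) / 2 = d by ring]
  rcases hd.eq_or_lt with rfl | hd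
  · have : (p + 0) * (p - 0) / (p + 0 + (p - 0)) + (1 - (p + 0)) * (1 - (p - 0)) /
        (1 - (p + 0) + (1 - (p - 0))) ≤ 1 / 2 := by
      simp only [add_zero, sub_zero]
      have h1 : p * p / (p + p) = p / 2 := by
        by_cases h : p = 0
        · simp [h]
        · field_simp; try ring
      have h2 : (1 - p) * (1 - p) / (1 - p + (1 - p)) = (1 - p) / 2 := by
        by_cases h : 1 - p = 0
        · simp [h]
        · field_simp; try ring
      rw [h1, h2]; linarith
    simp only [add_zero, sub_zero] at this ⊢
    linarith
  have hp0 : 0 < p := by linarith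
  have hp1 : 0 < 1 - p := by linarith
  have hl : (p + d) * (p - d) / (p + d + (p - d)) + (1 - (p + d)) * (1 - (p - d)) /
        (1 - (p + d) + (1 - (p - d))) = 1 / 2 - d ^ 2 / (2 * (p * (1 - p))) := by
    rw [show p + d + (p - d) = 2 * p by ring, show 1 - (p + d) + (1 - (p - d)) = 2 * (1 - p) by ring]
    field_simp
    ring
  rw [hl]
  set x := η + (1 - 2 * η) * p with hx
  set e := (1 - 2 * η) * d with he
  have hη2 : 0 < 1 - 2 * η := by linarith
  have he0 : 0 ≤ e := by positivity
  have hed : e ≤ d := by rw [he]; nlinarith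
  have hxe : η ≤ x - e := by
    rw [hx, he]; nlinarith
  have hxe' : η ≤ 1 - x - e := by
    rw [hx, he]
    nlinarith
  have h1 := negMulLog_mid he0 (show e < x by linarith)
  have h2 := negMulLog_mid he0 (show e < 1 - x by linarith)
  have s1 : smoothEnt η p = Real.negMulLog x + Real.negMulLog (1 - x) := by
    rw [smoothEnt, Real.binEntropy_eq_negMulLog_add_negMulLog_one_sub]
  have s2 : smoothEnt η (p + d) = Real.negMulLog (x + e) + Real.negMulLog (1 - x - e) := by
    rw [smoothEnt, Real.binEntropy_eq_negMulLog_add_negMulLog_one_sub]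
    congr 2 <;> (rw [hx, he]; ring)
  have s3 : smoothEnt η (p - d) = Real.negMulLog (x - e) + Real.negMulLog (1 - x + e) := by
    rw [smoothEnt, Real.binEntropy_eq_negMulLog_add_negMulLog_one_sub]
    congr 2 <;> (rw [hx, he]; ring)
  rw [s1, s2, s3]
  have hx0 : 0 < x := by linarith
  have hx1 : 0 < 1 - x := by linarith
  have b1 : e ^ 4 / (3 * x ^ 3) ≤ 1 / 3 / η ^ 3 * d ^ 4 := by
    rw [show 1 / 3 / η ^ 3 * d ^ 4 = d ^ 4 / (3 * η ^ 3) by field_simp]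
    gcongr; linarith
  have b2 : e ^ 4 / (3 * (1 - x) ^ 3) ≤ 1 / 3 / η ^ 3 * d ^ 4 := by
    rw [show 1 / 3 / η ^ 3 * d ^ 4 = d ^ 4 / (3 * η ^ 3) by field_simp]
    gcongr; linarith
  have b3 : e ^ 2 / (2 * x) + e ^ 2 / (2 * (1 - x)) ≤ d ^ 2 / (2 * (p * (1 - p))) := by
    rw [show e ^ 2 / (2 * x) + e ^ 2 / (2 * (1 - x)) = e ^ 2 / (2 * (x * (1 - x))) by
      field_simp; ring]
    rw [div_le_div_iff₀ (by positivity) (by positivity)]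
    have : (1 - 2 * η) ^ 2 * (p * (1 - p)) ≤ x * (1 - x) := by
      rw [hx]; nlinarith
    rw [he]
    nlinarith [mul_le_mul_of_nonneg_left this (sq_nonneg d)]
  have b4 : 2 / 3 / η ^ 3 * d ^ 4 = 1 / 3 / η ^ 3 * d ^ 4 + 1 / 3 / η ^ 3 * d ^ 4 := by ring
  rw [b4]
  linarith

lemma smoothEnt_half (η : ℝ) : smoothEnt η (1 / 2) = Real.log 2 := by
  rw [smoothEnt, show η + (1 - 2 * η) * (1 / 2) = 2⁻¹ by ring, Real.binEntropy_two_inv]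

lemma smoothEnt_one_sub (η p : ℝ) : smoothEnt η (1 - p) = smoothEnt η p := by
  rw [smoothEnt, smoothEnt, ← Real.binEntropy_one_sub]
  congr 1; ring

lemma continuous_smoothEnt (η : ℝ) : Continuous (smoothEnt η) := by
  unfold smoothEnt; fun_prop

lemma smoothEnt_mono {η p q : ℝ} (hη : 0 ≤ η) (hη' : η ≤ 1 / 2) (hp : 0 ≤ p) (hpq : p ≤ q)
    (hq : q ≤ 1 / 2) : smoothEnt η p ≤ smoothEnt η q := by
  apply Real.binEntropy_strictMonoOn.monotoneOn
  · constructor <;> nlinarith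
  · constructor <;> nlinarith
  · nlinarith

lemma concaveOn_smoothEnt {η : ℝ} (hη : 0 ≤ η) (hη' : η ≤ 1 / 2) :
    ConcaveOn ℝ (Set.Icc 0 1) (smoothEnt η) := by
  refine ⟨convex_Icc 0 1, fun x hx y hy a b ha hb hab => ?_⟩
  have hm : ∀ z ∈ Set.Icc (0:ℝ) 1, η + (1 - 2 * η) * z ∈ Set.Icc (0:ℝ) 1 := by
    intro z hz
    obtain ⟨h0, h1⟩ := hz
    constructor <;> nlinarith
  have := Real.strictConcave_binEntropy.concaveOn.2 (hm x hx) (hm y hy) ha hb hab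
  refine this.trans (le_of_eq ?_)
  unfold smoothEnt
  congr 1
  simp only [smul_eq_mul]
  obtain rfl : b = 1 - a := by linarith
  ring

/-! ### The posterior martingale -/

/-- `E[g(X + s) | Y = 1]` as a function of `s`, for one channel use with uniform input `X` and
output `Y`. -/
noncomputable def obsTrue (α : ℝ) (g : ℕ → ℝ) : ℕ → ℝ := fun s => (1 - α) * g (s + 1) + α * g s

/-- `E[g(X + s) | Y = 0]` as a function of `s`, for one channel use with uniform input `X` and
output `Y`. -/
noncomputable def obsFalse (α : ℝ) (g : ℕ → ℝ) : ℕ → ℝ := fun s => α * g (s + 1) + (1 - α) * g s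

/-- `E[g(w)]` with `w` a Binomial(`n`, 1/2) random variable. -/
noncomputable def binAvg : ℕ → (ℕ → ℝ) → ℝ
  | 0, g => g 0
  | n + 1, g => (binAvg n (fun s => g (s + 1)) + binAvg n g) / 2

/-- `E[g(w(X^n)) | Y^n = y]`. -/
noncomputable def post (n : ℕ) (α : ℝ) (g : ℕ → ℝ) (y : Fin n → Bool) : ℝ :=
  ∑ x, bsc n α y x * g (hw x)

lemma hw_cons {n : ℕ} (b : Bool) (x : Fin n → Bool) :
    hw (Fin.cons b x : Fin (n+1) → Bool) = hw x + if b then 1 else 0 := by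
  unfold hw
  rw [Finset.card_filter, Finset.card_filter, Fin.sum_univ_succ]
  cases b <;> simp [add_comm]

lemma binAvg_lin (n : ℕ) (a b : ℝ) (f g : ℕ → ℝ) :
    binAvg n (fun s => a * f s + b * g s) = a * binAvg n f + b * binAvg n g := by
  induction n generalizing f g with
  | zero => simp [binAvg]
  | succ n ih =>
    simp only [binAvg]
    rw [ih f g, ih (fun s => f (s + 1)) (fun s => g (s + 1))]
    ring

lemma binAvg_eq_sum (n : ℕ) (g : ℕ → ℝ) :
    binAvg n g = (∑ j ∈ range (n + 1), (n.choose j : ℝ) * g j) / 2 ^ n := by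
  induction n generalizing g with
  | zero => simp [binAvg]
  | succ n ih =>
    have := Finset.sum_choose_succ_mul (fun i _ => g i) n
    rw [this, binAvg, ih, ih, pow_succ]
    field_simp
    ring

lemma post_cons_true {n : ℕ} (α : ℝ) (g : ℕ → ℝ) (y : Fin n → Bool) :
    post (n+1) α g (Fin.cons true y) = post n α (obsTrue α g) y := by
  unfold post
  rw [sum_cube_succ, ← Finset.sum_add_distrib]
  refine Finset.sum_congr rfl fun x _ => ?_
  simp only [bsc_cons, hw_cons, obsTrue]
  simp
  ring

lemma post_cons_false {n : ℕ} (α : ℝ) (g : ℕ → ℝ) (y : Fin n → Bool) :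
    post (n+1) α g (Fin.cons false y) = post n α (obsFalse α g) y := by
  unfold post
  rw [sum_cube_succ, ← Finset.sum_add_distrib]
  refine Finset.sum_congr rfl fun x _ => ?_
  simp only [bsc_cons, hw_cons, obsFalse]
  simp
  ring

/-- The martingale property of the posterior: averaging over the observed bit restores the mean. -/
lemma binAvg_obs (n : ℕ) (α : ℝ) (g : ℕ → ℝ) :
    binAvg n (obsTrue α g) + binAvg n (obsFalse α g) = 2 * binAvg (n + 1) g := by
  unfold obsTrue obsFalse
  rw [binAvg_lin, binAvg_lin, binAvg]
  ring

lemma sum_post (n : ℕ) (α : ℝ) (g : ℕ → ℝ) : ∑ y, post n α g y = 2 ^ n * binAvg n g := by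
  induction n generalizing g with
  | zero => simp [post, binAvg, bsc, hw]
  | succ n ih =>
    rw [sum_cube_succ]
    simp only [post_cons_true, post_cons_false, ih]
    rw [← mul_add, binAvg_obs]
    ring

lemma post_mem {n : ℕ} {α : ℝ} (h0 : 0 ≤ α) (h1 : α ≤ 1) {g : ℕ → ℝ} (hg0 : ∀ s, 0 ≤ g s)
    (hg1 : ∀ s, g s ≤ 1) (y : Fin n → Bool) : post n α g y ∈ Set.Icc (0:ℝ) 1 := by
  constructor
  · exact Finset.sum_nonneg fun x _ => mul_nonneg (bsc_nonneg h0 h1 y x) (hg0 _)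
  · rw [← sum_bsc n α y]
    exact Finset.sum_le_sum fun x _ => mul_le_of_le_one_right (bsc_nonneg h0 h1 y x) (hg1 _)

lemma binAvg_mono (n : ℕ) {f g : ℕ → ℝ} (h : ∀ s, f s ≤ g s) : binAvg n f ≤ binAvg n g := by
  induction n generalizing f g with
  | zero => exact h 0
  | succ n ih =>
    have h1 := ih (fun s => h (s + 1))
    have h2 := ih h
    simp only [binAvg]
    linarith

lemma binAvg_const (n : ℕ) (c : ℝ) : binAvg n (fun _ => c) = c := by
  induction n with
  | zero => rfl
  | succ n ih => simp only [binAvg, ih]; ring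

/-- The normalised central binomial coefficient `C(2i, i) / 4^i`, the probability that a simple
random walk is at the origin at time `2i`. -/
noncomputable def ret (i : ℕ) : ℝ := (Nat.centralBinom i : ℝ) / 4 ^ i

lemma ret_pos (i : ℕ) : 0 < ret i := by
  have := Nat.centralBinom_pos i
  unfold ret; positivity

lemma ret_succ (i : ℕ) : ret (i + 1) * (2 * i + 2) = ret i * (2 * i + 1) := by
  unfold ret
  have : ((i + 1 : ℕ) : ℝ) * (Nat.centralBinom (i + 1) : ℝ) = 2 * (2 * i + 1) * Nat.centralBinom i := by
    exact_mod_cast Nat.succ_mul_centralBinom_succ i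
  push_cast at this
  rw [pow_succ]
  field_simp
  linarith

lemma ret_sq_mul_le (i : ℕ) : ret i ^ 2 * (2 * i + 1) ≤ 1 := by
  induction i with
  | zero => simp [ret]
  | succ i ih =>
    have h := ret_succ i
    have h2 : ret (i + 1) = ret i * (2 * i + 1) / (2 * i + 2) := by field_simp; linarith
    rw [h2]
    push_cast
    have : (ret i * (2 * i + 1) / (2 * i + 2)) ^ 2 * (2 * (i + 1) + 1) =
      (ret i ^ 2 * (2 * i + 1)) * (((2 * i + 1) * (2 * i + 3)) / (2 * i + 2) ^ 2) := by
      field_simp; ring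
    rw [this]
    have h3 : ((2 * i + 1 : ℝ) * (2 * i + 3)) / (2 * i + 2) ^ 2 ≤ 1 := by
      rw [div_le_one (by positivity)]; nlinarith
    exact mul_le_one₀ ih (by positivity) h3

lemma ret_le (i : ℕ) : ret i ≤ 1 / √(2 * i + 1) := by
  rw [le_div_iff₀ (by positivity)]
  have h := ret_sq_mul_le i
  have : (ret i * √(2 * i + 1)) ^ 2 ≤ 1 ^ 2 := by
    rw [mul_pow, Real.sq_sqrt (by positivity)]; simpa using h
  exact le_of_sq_le_sq this (by norm_num)

/-- Every atom of the Binomial(`n`, 1/2) law has mass at most `1/√(n+1)`. -/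
lemma choose_div_le (n j : ℕ) : (n.choose j : ℝ) / 2 ^ n ≤ 1 / √(n + 1) := by
  have h1 : (n.choose j : ℝ) / 2 ^ n ≤ (n.choose (n / 2) : ℝ) / 2 ^ n := by
    gcongr; exact Nat.choose_le_middle j n
  refine h1.trans ?_
  rcases Nat.even_or_odd' n with ⟨i, rfl | rfl⟩
  · have := ret_le i
    rw [show 2 * i / 2 = i by omega]
    unfold ret Nat.centralBinom at this
    rw [pow_mul]; norm_num
    simpa using this
  · have := ret_le (i + 1)
    have h2 : (Nat.centralBinom (i + 1)) = 2 * (2 * i + 1).choose i := by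
      rw [Nat.centralBinom, show 2 * (i + 1) = (2 * i + 1) + 1 by ring, Nat.choose_succ_succ,
        ← Nat.choose_symm_half i]; ring
    rw [show (2 * i + 1) / 2 = i by omega]
    have h3 : ret (i + 1) = ((2 * i + 1).choose i : ℝ) / 2 ^ (2 * i + 1) := by
      unfold ret
      rw [h2, show (4:ℝ) = 2 ^ 2 by norm_num, ← pow_mul, show 2 * (i + 1) = (2 * i + 1) + 1 by ring,
        pow_succ]
      push_cast; field_simp
    rw [← h3]
    refine this.trans ?_
    push_cast
    gcongr
    linarith

/-- A bound for the increments of the posterior when `n` further bits are unobserved: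
for monotone `g` with values in `[0,1]`, `E[g(w+1) - g(w)]` is at most the largest atom
of the law of `w`. -/
lemma binAvg_diff_le (n : ℕ) {g : ℕ → ℝ} (hm : Monotone g) (hg0 : ∀ s, 0 ≤ g s)
    (hg1 : ∀ s, g s ≤ 1) : binAvg n (fun s => g (s + 1) - g s) ≤ 1 / √(n + 1) := by
  rw [binAvg_eq_sum, Finset.sum_div]
  calc _ ≤ ∑ j ∈ range (n + 1), (1 / √(n + 1)) * (g (j + 1) - g j) := by
        refine Finset.sum_le_sum fun j _ => ?_
        have : 0 ≤ g (j + 1) - g j := sub_nonneg.2 (hm (Nat.le_succ j))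
        calc _ = (n.choose j : ℝ) / 2 ^ n * (g (j + 1) - g j) := by ring
          _ ≤ _ := mul_le_mul_of_nonneg_right (choose_div_le n j) this
    _ = (1 / √(n + 1)) * (g (n + 1) - g 0) := by
        rw [← Finset.mul_sum, Finset.sum_range_sub]
    _ ≤ _ := by
        refine mul_le_of_le_one_right (by positivity) ?_
        linarith [hg0 0, hg1 (n + 1)]

/-- The accumulated third-order weight of the posterior martingale, bounding the error made when
the entropy decrements are replaced by squared increments. -/
noncomputable def martErr (α : ℝ) : ℕ → (ℕ → ℝ) → ℝ
  | 0, _ => 0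
  | n + 1, g => (1 / √(n + 1)) ^ 3 * binAvg n (fun s => g (s + 1) - g s)
      + (martErr α n (obsTrue α g) + martErr α n (obsFalse α g)) / 2

/-- The expected discrete derivative is preserved along the martingale, so the error has a closed
form. -/
lemma martErr_succ (α : ℝ) (n : ℕ) (g : ℕ → ℝ) : martErr α (n + 1) g =
    (∑ r ∈ range (n + 1), (1 / √(r + 1 : ℝ)) ^ 3) * binAvg n (fun s => g (s + 1) - g s) := by
  induction n generalizing g with
  | zero => simp [martErr]
  | succ n ih =>
    rw [martErr, ih, ih, Finset.sum_range_succ _ (n + 1), ← mul_add]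
    have h1 := binAvg_obs n α (fun s => g (s + 1) - g s)
    have h2 : (fun s => obsTrue α g (s + 1) - obsTrue α g s) = obsTrue α (fun s => g (s + 1) - g s) := by
      funext s; simp only [obsTrue]; ring
    have h3 : (fun s => obsFalse α g (s + 1) - obsFalse α g s) = obsFalse α (fun s => g (s + 1) - g s) := by
      funext s; simp only [obsFalse]; ring
    rw [h2, h3, h1]
    push_cast
    ring

/-- The SMSE is controlled by the decrease of (smoothed) entropy of the posterior martingale
`P[b = 1 | Y^k]`, when `b` is a randomised monotone function `g` of the weight of `X^n`. -/
lemma smse_post_le {α η : ℝ} (h0 : 0 ≤ α) (h1 : α ≤ 1 / 2) (hη : 0 < η) (hη' : η < 1 / 2)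
    (n : ℕ) (g : ℕ → ℝ) (hm : Monotone g) (hg0 : ∀ s, 0 ≤ g s) (hg1 : ∀ s, g s ≤ 1)
    (w : ℝ) (hw : 0 < w) :
    smse (fun y => w * post n α g y) + smse (fun y => w * (1 - post n α g y)) ≤
      w * 2 ^ n * (n / 4 - (smoothEnt η (binAvg n g)
        - (2 ^ n)⁻¹ * ∑ y, smoothEnt η (post n α g y)) / 2 + 1 / 3 / η ^ 3 * martErr α n g) := by
  induction n generalizing g with
  | zero =>
    simp [smse, binAvg, post, martErr, bsc, _root_.hw]
  | succ n ih =>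
    have m1 : Monotone (obsTrue α g) := fun s t hst => by
      have a1 := hm hst
      have a2 := hm (Nat.succ_le_succ hst)
      simp only [obsTrue, Nat.succ_eq_add_one] at *
      have : 0 ≤ 1 - α := by linarith
      gcongr
    have m2 : Monotone (obsFalse α g) := fun s t hst => by
      have a1 := hm hst
      have a2 := hm (Nat.succ_le_succ hst)
      simp only [obsFalse, Nat.succ_eq_add_one] at *
      have : 0 ≤ 1 - α := by linarith
      gcongr
    have p1 : ∀ s, 0 ≤ obsTrue α g s := fun s => by
      have := hg0 s; have := hg0 (s+1); have : 0 ≤ 1 - α := by linarith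
      unfold obsTrue; positivity
    have p2 : ∀ s, 0 ≤ obsFalse α g s := fun s => by
      have := hg0 s; have := hg0 (s+1); have : 0 ≤ 1 - α := by linarith
      unfold obsFalse; positivity
    have q1 : ∀ s, obsTrue α g s ≤ 1 := fun s => by
      have := hg1 s; have := hg1 (s+1)
      unfold obsTrue; nlinarith
    have q2 : ∀ s, obsFalse α g s ≤ 1 := fun s => by
      have := hg1 s; have := hg1 (s+1)
      unfold obsFalse; nlinarith
    have i1 := ih (obsTrue α g) m1 p1 q1
    have i2 := ih (obsFalse α g) m2 p2 q2
    rw [smse_succ, smse_succ (fun y => w * (1 - post (n+1) α g y)), sum_cube_succ]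
    simp only [post_cons_true, post_cons_false]
    have t1 : ∀ f, ∑ y, w * post n α f y = w * 2 ^ n * binAvg n f := fun f => by
      rw [← Finset.mul_sum, sum_post]; ring
    have t2 : ∀ f, ∑ y, w * (1 - post n α f y) = w * 2 ^ n * (1 - binAvg n f) := fun f => by
      rw [← Finset.mul_sum, Finset.sum_sub_distrib, sum_post]
      simp; ring
    simp only [t1, t2]
    set a := binAvg n (obsTrue α g) with ha
    set b := binAvg n (obsFalse α g) with hb
    have hab : a - b = (1 - 2 * α) * binAvg n (fun s => g (s + 1) - g s) := by
      have := binAvg_lin n 1 (-1) (fun s => g (s + 1)) g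
      have e : (fun s => g (s + 1) - g s) = (fun s => 1 * g (s + 1) + (-1) * g s) := by
        funext s; ring
      rw [e, this, ha, hb]
      unfold obsTrue obsFalse
      rw [binAvg_lin, binAvg_lin]; ring
    have hmean : binAvg (n+1) g = (a + b) / 2 := by
      have := binAvg_obs n α g; linarith
    set D := binAvg n (fun s => g (s + 1) - g s) with hD
    have hD0 : 0 ≤ D := by
      rw [← binAvg_const n 0]
      exact binAvg_mono n (fun s => sub_nonneg.2 (hm (Nat.le_succ s)))
    have hD1 : D ≤ 1 / √(n + 1) := binAvg_diff_le n hm hg0 hg1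
    have hb0 : 0 ≤ b := by
      rw [← binAvg_const n 0]; exact binAvg_mono n p2
    have ha1 : a ≤ 1 := by
      rw [← binAvg_const n 1]; exact binAvg_mono n q1
    have hba : b ≤ a := by nlinarith
    have key := smoothEnt_mid hη hη' hb0 hba ha1
    have hd : ((a - b) / 2) ^ 4 ≤ (1 / √(n + 1 : ℝ)) ^ 3 * D := by
      have : (a - b) / 2 ≤ D := by nlinarith
      have h0' : 0 ≤ (a - b) / 2 := by linarith
      calc ((a - b) / 2) ^ 4 ≤ D ^ 4 := by gcongr
        _ = D ^ 3 * D := by ring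
        _ ≤ _ := by gcongr
    have hd2 : 2 / 3 / η ^ 3 * ((a - b) / 2) ^ 4 ≤ 2 / 3 / η ^ 3 * ((1 / √(n + 1 : ℝ)) ^ 3 * D) := by
      gcongr
    have hW : 0 < w * 2 ^ n := by positivity
    set W := w * 2 ^ n with hWdef
    have f1 : W * a * (W * b) / (W * a + W * b) = W * (a * b / (a + b)) := by
      rw [← mul_add, show W * a * (W * b) = W * (W * (a * b)) by ring,
        mul_div_mul_left _ _ hW.ne', mul_div_assoc]
    have f2 : W * (1 - a) * (W * (1 - b)) / (W * (1 - a) + W * (1 - b))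
        = W * ((1 - a) * (1 - b) / (1 - a + (1 - b))) := by
      rw [← mul_add, show W * (1 - a) * (W * (1 - b)) = W * (W * ((1 - a) * (1 - b))) by ring,
        mul_div_mul_left _ _ hW.ne', mul_div_assoc]
    rw [f1, f2, hmean, martErr, ← hD]
    have key2 := mul_le_mul_of_nonneg_left (key.trans (add_le_add_right hd2 _)) hW.le
    set S1 := ∑ y, smoothEnt η (post n α (obsTrue α g) y)
    set S2 := ∑ y, smoothEnt η (post n α (obsFalse α g) y)
    have e1 : w * 2 ^ (n + 1) = 2 * W := by rw [hWdef, pow_succ]; ring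
    have e2 : ((2:ℝ) ^ (n + 1))⁻¹ = (2 ^ n)⁻¹ / 2 := by rw [pow_succ]; field_simp
    rw [e1, e2]
    push_cast
    refine (add_le_add key2 (add_le_add i1 i2)).trans' (le_of_eq (by ring)) |>.trans (le_of_eq (by ring))

/-! ### Noise sensitivity of majority and the arcsine law -/

/-- Summing over a pair of equal bits `(x, y)`, acting on functions of the two weights. -/
def agreeOp : Module.End ℝ (ℕ → ℕ → ℝ) where
  toFun q := fun s t => q (s + 1) (t + 1) + q s t
  map_add' p q := by funext s t; simp only [Pi.add_apply]; ring
  map_smul' c q := by funext s t; simp [mul_add]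

/-- Summing over a pair of distinct bits `(x, y)`, acting on functions of the two weights. -/
def disOp : Module.End ℝ (ℕ → ℕ → ℝ) where
  toFun q := fun s t => q (s + 1) t + q s (t + 1)
  map_add' p q := by funext s t; simp only [Pi.add_apply]; ring
  map_smul' c q := by funext s t; simp [mul_add]

lemma agreeOp_apply (q : ℕ → ℕ → ℝ) (s t : ℕ) : agreeOp q s t = q (s + 1) (t + 1) + q s t := rfl

lemma disOp_apply (q : ℕ → ℕ → ℝ) (s t : ℕ) : disOp q s t = q (s + 1) t + q s (t + 1) := rfl

lemma commute_ops : Commute disOp agreeOp := by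
  refine LinearMap.ext fun q => ?_
  funext s t
  simp only [Module.End.mul_apply, agreeOp_apply, disOp_apply]
  ring

lemma disOp_pow_apply (d : ℕ) (q : ℕ → ℕ → ℝ) (s t : ℕ) :
    (disOp ^ d) q s t = ∑ u ∈ range (d + 1), (d.choose u : ℝ) * q (s + u) (t + (d - u)) := by
  induction d generalizing s t with
  | zero => simp
  | succ d ih =>
    rw [pow_succ', Module.End.mul_apply, disOp_apply, ih, ih,
      Finset.sum_choose_succ_mul (fun i j => q (s + i) (t + j)), add_comm]
    congr 1
    · refine Finset.sum_congr rfl fun u hu => ?_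
      have : u ≤ d := Nat.lt_succ_iff.1 (Finset.mem_range.1 hu)
      rw [show t + 1 + (d - u) = t + (d + 1 - u) by omega]
    · refine Finset.sum_congr rfl fun u hu => ?_
      rw [show s + 1 + u = s + (u + 1) by omega]

lemma agreeOp_pow_apply (d : ℕ) (q : ℕ → ℕ → ℝ) (s t : ℕ) :
    (agreeOp ^ d) q s t = ∑ u ∈ range (d + 1), (d.choose u : ℝ) * q (s + u) (t + u) := by
  induction d generalizing s t with
  | zero => simp
  | succ d ih =>
    rw [pow_succ', Module.End.mul_apply, agreeOp_apply, ih, ih,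
      Finset.sum_choose_succ_mul (fun i j => q (s + i) (t + i)), add_comm]
    congr 1
    refine Finset.sum_congr rfl fun u hu => ?_
    rw [show s + 1 + u = s + (u + 1) by omega, show t + 1 + u = t + (u + 1) by omega]

/-- Generating-function form of the joint law of the two weights. -/
lemma sum_bsc_weights (n : ℕ) (α : ℝ) (q : ℕ → ℕ → ℝ) :
    ∑ y : Fin n → Bool, ∑ x, bsc n α y x * q (hw x) (hw y) =
      ((α • disOp + (1 - α) • agreeOp) ^ n) q 0 0 := by
  induction n generalizing q with
  | zero => simp [bsc, hw]
  | succ n ih =>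
    rw [pow_succ, Module.End.mul_apply, ← ih, sum_cube_succ, ← Finset.sum_add_distrib]
    refine Finset.sum_congr rfl fun y _ => ?_
    rw [sum_cube_succ, sum_cube_succ, ← Finset.sum_add_distrib, ← Finset.sum_add_distrib,
      ← Finset.sum_add_distrib]
    refine Finset.sum_congr rfl fun x _ => ?_
    simp only [bsc_cons, hw_cons, LinearMap.add_apply, LinearMap.smul_apply, Pi.add_apply,
      Pi.smul_apply, smul_eq_mul, agreeOp_apply, disOp_apply]
    simp
    ring

/-- `majErr m d` is the probability that the majority of a uniform word of length `2m+1` changes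
when `d` given bits are flipped. -/
noncomputable def majErr (m d : ℕ) : ℝ :=
  (disOp ^ d) ((agreeOp ^ (2 * m + 1 - d))
    (fun s t => if (m < s ↔ m < t) then 0 else 1)) 0 0 / 2 ^ (2 * m + 1)

/-- The probability that `maj(X^n) ≠ maj(Y^n)`, conditioned on the number `d` of bits flipped by
the channel. -/
lemma sum_bsc_maj (m : ℕ) (α : ℝ) :
    (∑ y : Fin (2 * m + 1) → Bool, ∑ x, bsc (2 * m + 1) α y x *
      (if (m < hw x ↔ m < hw y) then 0 else 1)) / 2 ^ (2 * m + 1) =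
    ∑ d ∈ range (2 * m + 1 + 1),
      ((2 * m + 1).choose d : ℝ) * α ^ d * (1 - α) ^ (2 * m + 1 - d) * majErr m d := by
  rw [sum_bsc_weights (2 * m + 1) α (fun s t => if (m < s ↔ m < t) then 0 else 1)]
  have hc : Commute (α • disOp) ((1 - α) • agreeOp) := (commute_ops.smul_left α).smul_right (1 - α)
  rw [hc.add_pow, LinearMap.sum_apply, Finset.sum_apply, Finset.sum_apply, Finset.sum_div]
  refine Finset.sum_congr rfl fun d _ => ?_
  rw [majErr, ← Nat.cast_comm, smul_pow, smul_pow]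
  simp only [Module.End.mul_apply, LinearMap.smul_apply, map_smul, Module.End.natCast_apply,
    Pi.smul_apply, smul_eq_mul, nsmul_eq_mul]
  simp
  ring

lemma majErr_zero (m : ℕ) : majErr m 0 = 0 := by
  simp [majErr, agreeOp_pow_apply]

lemma majErr_le_one (m d : ℕ) (hd : d ≤ 2 * m + 1) : majErr m d ≤ 1 := by
  have hA : ∀ e (q : ℕ → ℕ → ℝ) c, (∀ s t, q s t ≤ c) → ∀ s t, (agreeOp ^ e) q s t ≤ 2 ^ e * c := by
    intro e
    induction e with
    | zero => intro q c h s t; simpa using h s t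
    | succ e ih =>
      intro q c h s t
      rw [pow_succ', Module.End.mul_apply, agreeOp_apply, pow_succ]
      linarith [ih q c h s t, ih q c h (s+1) (t+1)]
  have hD : ∀ e (q : ℕ → ℕ → ℝ) c, (∀ s t, q s t ≤ c) → ∀ s t, (disOp ^ e) q s t ≤ 2 ^ e * c := by
    intro e
    induction e with
    | zero => intro q c h s t; simpa using h s t
    | succ e ih =>
      intro q c h s t
      rw [pow_succ', Module.End.mul_apply, disOp_apply, pow_succ]
      linarith [ih q c h s (t+1), ih q c h (s+1) t]
  unfold majErr
  rw [div_le_one (by positivity)]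
  have h1 := hA (2 * m + 1 - d) (fun s t => if (m < s ↔ m < t) then 0 else 1) 1
    (fun s t => by split_ifs <;> norm_num)
  refine (hD d _ _ h1 0 0).trans (le_of_eq ?_)
  rw [← mul_assoc, ← pow_add, mul_one]
  congr 1; omega

/-- Flipping one more bit changes the error probability only when both the flipped and the
unflipped words are balanced on the other bits. -/
lemma majErr_succ_aux (m d : ℕ) (hd : d ≤ 2 * m) : majErr m (d + 1) = majErr m d +
    (∑ u ∈ range (d + 1), (d.choose u : ℝ) * ∑ v ∈ range (2 * m - d + 1),
      ((2 * m - d).choose v : ℝ) * (if u + v = m ∧ d - u + v = m then 1 else 0)) / 4 ^ m := by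
  unfold majErr
  set q : ℕ → ℕ → ℝ := fun s t => if (m < s ↔ m < t) then 0 else 1 with hq
  set δ : ℕ → ℕ → ℝ := fun s t => if s = m ∧ t = m then 1 else 0 with hδ
  have hdiff : disOp q = agreeOp q + (2:ℝ) • δ := by
    funext s t
    simp only [disOp_apply, agreeOp_apply, Pi.add_apply, Pi.smul_apply, smul_eq_mul, hq, hδ]
    split_ifs <;> first | omega | norm_num
  have hc : Commute disOp (agreeOp ^ (2 * m - d)) := commute_ops.pow_right _
  have e1 : 2 * m + 1 - (d + 1) = 2 * m - d := by omega
  have e2 : 2 * m + 1 - d = (2 * m - d) + 1 := by omega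
  rw [e1, e2]
  have h1 : (disOp ^ (d + 1)) ((agreeOp ^ (2 * m - d)) q) =
      (disOp ^ d) ((agreeOp ^ (2 * m - d)) (disOp q)) := by
    have := hc.eq
    rw [pow_succ, Module.End.mul_apply, ← Module.End.mul_apply disOp, this, Module.End.mul_apply]
  have h2 : (disOp ^ d) ((agreeOp ^ (2 * m - d + 1)) q) =
      (disOp ^ d) ((agreeOp ^ (2 * m - d)) (agreeOp q)) := by
    rw [pow_succ, Module.End.mul_apply]
  have h3 : (disOp ^ d) ((agreeOp ^ (2 * m - d)) δ) 0 0 =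
      ∑ u ∈ range (d + 1), (d.choose u : ℝ) * ∑ v ∈ range (2 * m - d + 1),
      ((2 * m - d).choose v : ℝ) * (if u + v = m ∧ d - u + v = m then 1 else 0) := by
    simp only [disOp_pow_apply, agreeOp_pow_apply, zero_add, hδ]
  rw [h1, h2, hdiff, map_add, map_add, map_smul, map_smul, Pi.add_apply, Pi.add_apply,
    Pi.smul_apply, Pi.smul_apply, h3, pow_succ, pow_mul, smul_eq_mul]
  norm_num
  field_simp

lemma majErr_succ_odd (m i : ℕ) (hd : 2 * i + 1 ≤ 2 * m) :
    majErr m (2 * i + 1 + 1) = majErr m (2 * i + 1) := by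
  rw [majErr_succ_aux m _ hd]
  have : ∑ u ∈ range (2 * i + 1 + 1), ((2 * i + 1).choose u : ℝ) *
      ∑ v ∈ range (2 * m - (2 * i + 1) + 1), ((2 * m - (2 * i + 1)).choose v : ℝ) *
        (if u + v = m ∧ 2 * i + 1 - u + v = m then (1:ℝ) else 0) = 0 := by
    refine Finset.sum_eq_zero fun u hu => ?_
    have hu' := Finset.mem_range.1 hu
    rw [Finset.sum_eq_zero, mul_zero]
    intro v _
    rw [if_neg (by omega), mul_zero]
  rw [this]; simp

/-- Together with `majErr_succ_odd`, this gives `majErr m d = ∑_{2i < d} ret i * ret (m - i)`, the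
discrete arcsine law. -/
lemma majErr_succ_even (m i : ℕ) (hd : i ≤ m) :
    majErr m (2 * i + 1) = majErr m (2 * i) + ret i * ret (m - i) := by
  rw [majErr_succ_aux m _ (by omega)]
  congr 1
  rw [Finset.sum_eq_single i, Finset.sum_eq_single (m - i)]
  · rw [if_pos (by omega), ret, ret, Nat.centralBinom, Nat.centralBinom,
      show 2 * m - 2 * i = 2 * (m - i) by omega, div_mul_div_comm, ← pow_add,
      show i + (m - i) = m by omega, mul_one]
  · intro v _ hv
    rw [if_neg (by omega), mul_zero]
  · intro h
    exact absurd (Finset.mem_range.2 (by omega)) h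
  · intro u hu hui
    have hu' := Finset.mem_range.1 hu
    rw [Finset.sum_eq_zero, mul_zero]
    intro v _
    rw [if_neg (by omega), mul_zero]
  · intro h
    exact absurd (Finset.mem_range.2 (by omega)) h

/-- The return probabilities are governed by Wallis' partial products, which yields the sharp
constant in `ret k ≤ 1 / √(π k)`. -/
lemma ret_sq_mul_wallis (k : ℕ) : ret k ^ 2 * (2 * k + 1) * Real.Wallis.W k = 1 := by
  induction k with
  | zero => simp [ret, Real.Wallis.W]
  | succ k ih =>
    have h2 : ret (k + 1) = ret k * (2 * k + 1) / (2 * k + 2) := by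
      have := ret_succ k
      field_simp; linarith
    rw [h2, Real.Wallis.W_succ]
    refine Eq.trans ?_ ih
    push_cast
    field_simp
    ring

lemma ret_sq_le (k : ℕ) : ret k ^ 2 * (Real.pi * k) ≤ 1 := by
  have h := ret_sq_mul_wallis k
  have hW := Real.Wallis.le_W k
  have hr := pow_pos (ret_pos k) 2
  rw [← h]
  have : Real.pi * k ≤ (2 * k + 1) * Real.Wallis.W k := by
    refine le_trans ?_ (mul_le_mul_of_nonneg_left hW (by positivity))
    have : (2 * (k:ℝ) + 1) * ((2 * k + 1) / (2 * k + 2) * (Real.pi / 2)) =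
      Real.pi * k + Real.pi / (4 * (k + 1)) := by field_simp; ring
    rw [this]
    have := Real.pi_pos
    have : 0 ≤ Real.pi / (4 * ((k:ℝ) + 1)) := by positivity
    linarith
  nlinarith

/-- The increments of `(2/π) arcsin √(x/m)`, the arcsine distribution function, dominate the
jumps of `majErr` on the left half of its range. -/
lemma ret_mul_ret_le (m i : ℕ) (hi : 2 * (i + 1) ≤ m) : ret (i + 1) * ret (m - (i + 1)) ≤
    2 / Real.pi * Real.arcsin √(((i + 1 : ℕ) : ℝ) / m) - 2 / Real.pi * Real.arcsin √((i : ℝ) / m) := by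
  have hm : (0:ℝ) < m := by exact_mod_cast (by omega : 0 < m)
  have him : 2 * ((i:ℝ) + 1) ≤ m := by exact_mod_cast hi
  have hi0 : (0:ℝ) ≤ i := by positivity
  obtain ⟨c, hc, hs⟩ := exists_hasDerivAt_eq_slope
    (fun x : ℝ => 2 / Real.pi * Real.arcsin √(x / m))
    (fun x => 1 / (Real.pi * √(x * (m - x)))) (show (i:ℝ) < i + 1 by linarith)
    (by fun_prop) (by
      intro x hx
      have hx0 : 0 < x := lt_of_le_of_lt hi0 hx.1
      have hxm : x < m := by linarith [hx.2]
      have hxm0 : 0 < m - x := by linarith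
      have hq : 0 < x / m := by positivity
      have hq1 : x / m < 1 := by rwa [div_lt_one hm]
      have hlt : √(x / m) < 1 := by rw [Real.sqrt_lt' one_pos]; simpa using hq1
      have hgt : -1 < √(x / m) := lt_of_lt_of_le (by norm_num) (Real.sqrt_nonneg _)
      have h1 := ((hasDerivAt_id x).div_const (m:ℝ)).sqrt hq.ne'
      have h2 := ((Real.hasDerivAt_arcsin hgt.ne' hlt.ne).comp x h1).const_mul (2 / Real.pi)
      convert! h2 using 1
      rw [Real.sq_sqrt hq.le, show 1 - x / m = (m - x) / m by field_simp, id,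
        Real.sqrt_div hxm0.le, Real.sqrt_div hx0.le, Real.sqrt_mul hx0.le]
      have s1 : 0 < √x := Real.sqrt_pos.2 hx0
      have s2 : 0 < √((m:ℝ) - x) := Real.sqrt_pos.2 hxm0
      have s3 : 0 < √(m:ℝ) := Real.sqrt_pos.2 hm
      have s4 := Real.sq_sqrt hm.le
      have := Real.pi_pos
      field_simp
      try linarith)
  have hcc : 1 / (Real.pi * √(c * (m - c))) = 2 / Real.pi * Real.arcsin √(((i + 1 : ℕ) : ℝ) / m)
      - 2 / Real.pi * Real.arcsin √((i : ℝ) / m) := by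
    rw [hs]; push_cast; ring
  rw [← hcc]
  have hpi := Real.pi_pos
  obtain ⟨hc1, hc2⟩ := hc
  have hc0 : 0 < c := lt_of_le_of_lt hi0 hc1
  have hcm : 0 < (m:ℝ) - c := by linarith
  rw [le_div_iff₀ (by positivity)]
  have r1 := ret_sq_le (i + 1)
  have r2 := ret_sq_le (m - (i + 1))
  have hcast : ((m - (i + 1) : ℕ) : ℝ) = m - (i + 1) := by
    rw [Nat.cast_sub (by omega)]; push_cast; ring
  rw [hcast] at r2
  push_cast at r1
  have p1 := ret_pos (i + 1)
  have p2 := ret_pos (m - (i + 1))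
  set x := ret (i + 1)
  set y := ret (m - (i + 1))
  refine le_of_sq_le_sq (b := 1) ?_ (by norm_num)
  have e : (x * y * (Real.pi * √(c * (m - c)))) ^ 2 = x ^ 2 * y ^ 2 * Real.pi ^ 2 * (c * (m - c)) := by
    have := Real.sq_sqrt (show 0 ≤ c * (m - c) by positivity)
    rw [mul_pow, mul_pow, mul_pow, this]; ring
  rw [e]
  have hmono : c * (m - c) ≤ (i + 1) * (m - (i + 1)) := by nlinarith
  calc x ^ 2 * y ^ 2 * Real.pi ^ 2 * (c * (m - c))
      ≤ x ^ 2 * y ^ 2 * Real.pi ^ 2 * ((i + 1) * (m - (i + 1))) := by gcongr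
    _ = (x ^ 2 * (Real.pi * (i + 1))) * (y ^ 2 * (Real.pi * (m - (i + 1)))) := by ring
    _ ≤ 1 ^ 2 := by
        have : 0 ≤ (m:ℝ) - (i + 1) := by linarith
        have := mul_le_mul r1 r2 (by positivity) zero_le_one
        simpa using this

lemma majErr_succ_le (m d : ℕ) (hd : d ≤ m) :
    majErr m (d + 1) ≤ ret m + 2 / Real.pi * Real.arcsin √(((d / 2 : ℕ) : ℝ) / m) := by
  induction d with
  | zero =>
    have := majErr_succ_even m 0 (Nat.zero_le m)
    rw [Nat.mul_zero, majErr_zero, Nat.sub_zero] at this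
    rw [this]
    simp [ret]
  | succ d ih =>
    have ih := ih (by omega)
    rcases Nat.even_or_odd' d with ⟨i, rfl | rfl⟩
    · rw [majErr_succ_odd m i (by omega), show (2 * i + 1) / 2 = 2 * i / 2 by omega]
      exact ih
    · have e := majErr_succ_even m (i + 1) (by omega)
      have h := ret_mul_ret_le m i (by omega)
      rw [show 2 * i + 1 + 1 = 2 * (i + 1) by ring] at ih ⊢
      rw [e, show 2 * (i + 1) / 2 = i + 1 by omega]
      rw [show (2 * i + 1) / 2 = i by omega] at ih
      linarith

lemma majErr_le (m d : ℕ) (hm : 0 < m) (hd : d ≤ m + 1) :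
    majErr m d ≤ ret m + 2 / Real.pi * Real.arcsin √((d : ℝ) / (2 * m + 1 : ℕ)) := by
  rcases d with _ | d
  · rw [majErr_zero]
    have := ret_pos m
    simp; exact this.le
  · refine (majErr_succ_le m d (by omega)).trans ?_
    have := Real.pi_pos
    refine add_le_add_right (mul_le_mul_of_nonneg_left ?_ (by positivity)) _
    apply Real.monotone_arcsin
    apply Real.sqrt_le_sqrt
    have h1 : ((d / 2 : ℕ) : ℝ) ≤ d / 2 := Nat.cast_div_le
    have hm' : (0:ℝ) < m := by exact_mod_cast hm
    have hd' : (d:ℝ) ≤ m := by exact_mod_cast (by omega : d ≤ m)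
    rw [div_le_div_iff₀ hm' (by positivity)]
    push_cast
    nlinarith

/-! ### Asymptotics and the comparison -/

lemma tendsto_ret : Filter.Tendsto ret Filter.atTop (nhds 0) := by
  refine squeeze_zero (fun i => (ret_pos i).le) ret_le ?_
  have h2 : Filter.Tendsto (fun i : ℕ => 2 * (i : ℝ) + 1) Filter.atTop Filter.atTop :=
    Filter.tendsto_atTop_add_const_right _ _
      (tendsto_natCast_atTop_atTop.const_mul_atTop two_pos)
  have h3 := (Real.tendsto_sqrt_atTop.comp h2).inv_tendsto_atTop
  simp only [one_div]
  exact h3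

lemma arccos_eq_two_mul_arcsin {α : ℝ} (h0 : 0 ≤ α) (h1 : α ≤ 1) :
    Real.arccos (1 - 2 * α) = 2 * Real.arcsin √α := by
  have hs : √α ≤ 1 := Real.sqrt_le_iff.2 ⟨zero_le_one, by simpa using h1⟩
  have hn := Real.sqrt_nonneg α
  have : 1 - 2 * α = Real.cos (2 * Real.arcsin √α) := by
    rw [Real.cos_two_mul, Real.cos_sq', Real.sin_arcsin (by linarith) hs, Real.sq_sqrt h0]; ring
  rw [this, Real.arccos_cos]
  · have := Real.arcsin_nonneg.2 hn; linarith
  · have := Real.arcsin_le_pi_div_two √α; linarith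

/-- The probability that `maj(X^n) ≠ maj(Y^n)` is asymptotically at most `arccos(1 - 2α) / π`. The
bound `t m` is `ret m` plus the Bernstein polynomial at `α` of a continuous function whose value at `α`
is the limit. -/
lemma exists_noise_bound {α : ℝ} (h0 : 0 ≤ α) (h1 : α < 1 / 2) :
    ∃ t : ℕ → ℝ, Filter.Tendsto t Filter.atTop (nhds (Real.arccos (1 - 2 * α) / Real.pi)) ∧
      ∀ m, 0 < m → (∑ y : Fin (2 * m + 1) → Bool, ∑ x, bsc (2 * m + 1) α y x *
      (if (m < hw x ↔ m < hw y) then 0 else 1)) / 2 ^ (2 * m + 1) ≤ t m := by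
  -- The penalty term makes `F ≥ 1` on `[1/2, 1]` while leaving the value at `α` unchanged.
  set x0 : ℝ := (α + 1 / 2) / 2 with hx0
  have hx0' : 0 < 1 / 2 - x0 := by rw [hx0]; linarith
  let F : C(unitInterval, ℝ) :=
    ⟨fun x => 2 / Real.pi * Real.arcsin √(x : ℝ) + (1 / (1 / 2 - x0)) * max 0 ((x : ℝ) - x0), by
      fun_prop⟩
  have hF : ∀ x : unitInterval, F x =
      2 / Real.pi * Real.arcsin √(x : ℝ) + (1 / (1 / 2 - x0)) * max 0 ((x : ℝ) - x0) := fun _ => rfl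
  let a : unitInterval := ⟨α, h0, by linarith⟩
  have hodd : Filter.Tendsto (fun m : ℕ => 2 * m + 1) Filter.atTop Filter.atTop :=
    Filter.tendsto_atTop_mono (fun m => by simp only [id]; omega) Filter.tendsto_id
  have hB : Filter.Tendsto (fun m : ℕ => bernsteinApproximation (2 * m + 1) F a) Filter.atTop
      (nhds (F a)) := by
    have := (ContinuousEvalConst.continuous_eval_const (F := C(unitInterval, ℝ)) a).continuousAt.tendsto.comp
      (bernsteinApproximation_uniform F)
    exact this.comp hodd
  have hFa : F a = Real.arccos (1 - 2 * α) / Real.pi := by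
    rw [hF, arccos_eq_two_mul_arcsin h0 (by linarith), max_eq_left]
    · change 2 / Real.pi * Real.arcsin √α + _ = _
      ring
    · change α - x0 ≤ 0
      rw [hx0]; linarith
  refine ⟨fun m => ret m + bernsteinApproximation (2 * m + 1) F a, ?_, fun m hm => ?_⟩
  · have := tendsto_ret.add hB
    rwa [zero_add, hFa] at this
  rw [sum_bsc_maj]
  have hF' : ∀ d : Fin (2 * m + 1 + 1), majErr m d ≤ ret m + F (bernstein.z d) := by
    intro d
    rw [hF]
    have hz : ((bernstein.z d : unitInterval) : ℝ) = (d : ℝ) / (2 * m + 1 : ℕ) := rfl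
    rw [hz]
    have hpi := Real.pi_pos
    have hmax : 0 ≤ (1 / (1 / 2 - x0)) * max 0 ((d : ℝ) / (2 * m + 1 : ℕ) - x0) := by positivity
    by_cases hd : (d : ℕ) ≤ m + 1
    · linarith [majErr_le m d hm hd]
    · have hd1 := majErr_le_one m d (Nat.lt_succ_iff.1 d.2)
      have hq : (1 / 2 : ℝ) ≤ (d : ℝ) / (2 * m + 1 : ℕ) := by
        rw [le_div_iff₀ (by positivity)]
        have : (m : ℝ) + 1 ≤ (d : ℕ) := by exact_mod_cast (by omega : m + 1 ≤ (d : ℕ))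
        push_cast; linarith
      have h2 : 1 ≤ (1 / (1 / 2 - x0)) * max 0 ((d : ℝ) / (2 * m + 1 : ℕ) - x0) := by
        rw [one_div, ← div_eq_inv_mul, le_div_iff₀ hx0', one_mul]
        exact le_max_of_le_right (by linarith)
      have h3 : 0 ≤ 2 / Real.pi * Real.arcsin √((d : ℝ) / (2 * m + 1 : ℕ)) := by
        have := Real.arcsin_nonneg.2 (Real.sqrt_nonneg ((d : ℝ) / (2 * m + 1 : ℕ)))
        positivity
      linarith [ret_pos m]
  beta_reduce
  rw [bernsteinApproximation.apply, Finset.sum_range]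
  have hp := bernstein.probability (2 * m + 1) a
  calc _ ≤ ∑ d : Fin (2 * m + 1 + 1), bernstein (2 * m + 1) d a * (ret m + F (bernstein.z d)) := by
        refine Finset.sum_le_sum fun d _ => ?_
        rw [← bernstein_apply (2 * m + 1) d a]
        exact mul_le_mul_of_nonneg_left (hF' d) bernstein_nonneg
    _ = _ := by
        simp only [mul_add, Finset.sum_add_distrib, ← Finset.sum_mul, hp, smul_eq_mul]
        ring

/-- Jensen's inequality, applied to the conditional probability that the guess `maj(y)` is wrong. -/
lemma sum_smoothEnt_le {α η : ℝ} (h0 : 0 ≤ α) (h1 : α ≤ 1 / 2) (hη : 0 < η) (hη' : η < 1 / 2) (m : ℕ) :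
    ((2:ℝ) ^ (2 * m + 1))⁻¹ * ∑ y, smoothEnt η (post (2 * m + 1) α (fun s => if m < s then 1 else 0) y)
      ≤ smoothEnt η ((∑ y : Fin (2 * m + 1) → Bool, ∑ x, bsc (2 * m + 1) α y x *
      (if (m < hw x ↔ m < hw y) then 0 else 1)) / 2 ^ (2 * m + 1)) := by
  set n := 2 * m + 1
  set g : ℕ → ℝ := fun s => if m < s then 1 else 0 with hg
  set r : (Fin n → Bool) → ℝ := fun y => ∑ x, bsc n α y x * (if (m < hw x ↔ m < hw y) then 0 else 1)
    with hr
  have hpost : ∀ y, r y = if m < hw y then 1 - post n α g y else post n α g y := by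
    intro y
    simp only [hr, post, hg]
    split_ifs with h
    · rw [eq_sub_iff_add_eq, ← Finset.sum_add_distrib]
      refine (Finset.sum_congr rfl fun x _ => ?_).trans (sum_bsc n α y)
      by_cases hx : m < hw x <;> simp [hx, h]
    · refine Finset.sum_congr rfl fun x _ => ?_
      by_cases hx : m < hw x <;> simp [hx, h]
  have hmem : ∀ y, post n α g y ∈ Set.Icc (0:ℝ) 1 := fun y =>
    post_mem h0 (by linarith) (fun s => by simp only [hg]; split_ifs <;> norm_num)
      (fun s => by simp only [hg]; split_ifs <;> norm_num) y
  have hrm : ∀ y, r y ∈ Set.Icc (0:ℝ) 1 := by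
    intro y
    obtain ⟨a, b⟩ := hmem y
    rw [hpost]
    split_ifs <;> constructor <;> linarith
  have hφ : ∀ y, smoothEnt η (post n α g y) = smoothEnt η (r y) := by
    intro y
    rw [hpost]
    split_ifs
    · rw [smoothEnt_one_sub]
    · rfl
  simp only [hφ]
  have hJ := (concaveOn_smoothEnt hη.le hη'.le).le_map_sum (t := Finset.univ)
    (w := fun _ : Fin n → Bool => ((2:ℝ) ^ n)⁻¹) (p := r) (fun _ _ => by positivity)
    (by simp) (fun y _ => hrm y)
  simp only [smul_eq_mul, ← Finset.mul_sum] at hJ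
  rwa [div_eq_inv_mul]

lemma binAvg_maj (m : ℕ) : binAvg (2 * m + 1) (fun s => if m < s then 1 else 0) = 1 / 2 := by
  rw [binAvg_eq_sum]
  have h := Nat.sum_range_choose_halfway m
  have h2 : ∑ j ∈ range (2 * m + 1 + 1), ((2 * m + 1).choose j : ℝ) = 2 ^ (2 * m + 1) := by
    exact_mod_cast Nat.sum_range_choose (2 * m + 1)
  have h3 : ∑ j ∈ range (2 * m + 1 + 1), ((2 * m + 1).choose j : ℝ) * (if m < j then 1 else 0) =
      ∑ j ∈ range (2 * m + 1 + 1), ((2 * m + 1).choose j : ℝ) -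
      ∑ j ∈ range (m + 1), ((2 * m + 1).choose j : ℝ) := by
    have : range (m + 1) = (range (2 * m + 1 + 1)).filter (fun j => ¬ m < j) := by
      ext j; simp; omega
    rw [this, Finset.sum_filter, ← Finset.sum_sub_distrib]
    refine Finset.sum_congr rfl fun j _ => ?_
    by_cases hj : m < j <;> simp [hj]
  have h4 : ∑ j ∈ range (m + 1), ((2 * m + 1).choose j : ℝ) = 4 ^ m := by exact_mod_cast h
  rw [h3, h2, h4, pow_succ, pow_mul]
  norm_num
  field_simp
  norm_num

lemma binAvg_maj_diff (m : ℕ) : binAvg (2 * m)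
    (fun s => (if m < s + 1 then (1:ℝ) else 0) - (if m < s then 1 else 0)) = ret m := by
  rw [binAvg_eq_sum, Finset.sum_eq_single m]
  · simp [ret, Nat.centralBinom, pow_mul]; norm_num
  · intro j _ hj
    by_cases h : m < j
    · simp [h, show m < j + 1 by omega]
    · simp [h, show ¬ m < j + 1 by omega]
  · intro h; exact absurd (Finset.mem_range.2 (by omega)) h

lemma noisyPMF_maj (m : ℕ) (α : ℝ) :
    noisyPMF (2 * m + 1) α (majF (2 * m + 1)) true =
      (fun y => ((2:ℝ) ^ (2 * m + 1))⁻¹ * post (2 * m + 1) α (fun s => if m < s then 1 else 0) y) ∧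
    noisyPMF (2 * m + 1) α (majF (2 * m + 1)) false =
      (fun y => ((2:ℝ) ^ (2 * m + 1))⁻¹ * (1 - post (2 * m + 1) α (fun s => if m < s then 1 else 0) y)) := by
  have hh : ∀ x : Fin (2 * m + 1) → Bool, (2 * m + 1 < 2 * hw x) ↔ m < hw x := fun x => by omega
  constructor
  · funext y
    unfold noisyPMF post majF
    rw [Finset.mul_sum]
    refine Finset.sum_congr rfl fun x _ => ?_
    simp only [hh, bsc]
    by_cases h : m < hw x <;> simp [h]
  · funext y
    have e : ∑ x, bsc (2 * m + 1) α y x * (if m < hw x then (0:ℝ) else 1) =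
        1 - post (2 * m + 1) α (fun s => if m < s then 1 else 0) y := by
      unfold post
      rw [eq_sub_iff_add_eq, ← Finset.sum_add_distrib]
      refine (Finset.sum_congr rfl fun x _ => ?_).trans (sum_bsc (2 * m + 1) α y)
      by_cases hx : m < hw x <;> simp [hx]
    rw [← e, Finset.mul_sum]
    unfold noisyPMF majF
    refine Finset.sum_congr rfl fun x _ => ?_
    simp only [hh, bsc]
    by_cases h : m < hw x <;> simp [h]

/-- The main estimate: the SMSE given the majority bit falls short of `n/4` by at least half the
(smoothed) mutual information between the bit and its guess `maj(Y^n)`, up to an error of order `ret m`. -/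
lemma noisySMSE_maj_le {α η : ℝ} (h0 : 0 ≤ α) (h1 : α ≤ 1 / 2) (hη : 0 < η) (hη' : η < 1 / 2) (m : ℕ) :
    noisySMSE (2 * m + 1) α (majF (2 * m + 1)) ≤ (2 * m + 1 : ℕ) / 4
      - (Real.log 2 - smoothEnt η ((∑ y : Fin (2 * m + 1) → Bool, ∑ x, bsc (2 * m + 1) α y x *
      (if (m < hw x ↔ m < hw y) then 0 else 1)) / 2 ^ (2 * m + 1))) / 2
      + 1 / 3 / η ^ 3 * ((∑ r ∈ range (2 * m + 1), (1 / √(r + 1 : ℝ)) ^ 3) * ret m) := by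
  have hmono : Monotone (fun s : ℕ => if m < s then (1:ℝ) else 0) := by
    intro s t hst
    dsimp only
    split_ifs <;> first | omega | norm_num
  have h := smse_post_le h0 h1 hη hη' (2 * m + 1) (fun s => if m < s then 1 else 0) hmono
    (fun s => by split_ifs <;> norm_num) (fun s => by split_ifs <;> norm_num)
    ((2:ℝ) ^ (2 * m + 1))⁻¹ (by positivity)
  rw [martErr_succ, binAvg_maj_diff, binAvg_maj, smoothEnt_half, inv_mul_cancel₀ (by positivity),
    one_mul] at h
  unfold noisySMSE
  rw [Fintype.sum_bool, (noisyPMF_maj m α).1, (noisyPMF_maj m α).2]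
  have hJ := sum_smoothEnt_le h0 h1 hη hη' m
  linarith

/-- Conversion of `μ(α)` from bits to nats. -/
lemma log_two_mul_muF (α : ℝ) :
    Real.log 2 * muF α = smoothEnt 0 (Real.arccos (1 - 2 * α) / Real.pi) := by
  have : Real.log 2 ≠ 0 := (Real.log_pos one_lt_two).ne'
  unfold muF binEnt smoothEnt Real.binEntropy Real.logb
  simp only [Real.log_inv]
  field_simp
  ring_nf

theorem stmt7 (α : ℝ) (hα0 : 0 ≤ α) (hα1 : α < 1/2)
    (hμ : 2 * Real.log 2 * (1 - muF α) > 1) :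
    (∀ ε : ℝ, 0 < ε → ∃ N : ℕ, ∀ n : ℕ, N ≤ n → ∀ hodd : Odd n,
      noisySMSE n α (majF n) - noisySMSE n α (fun x => x ⟨0, hodd.pos⟩) ≤
        -((1 - 2*α)^2 * (2 * Real.log 2 * (1 - muF α) - 1)) / 4 + ε) ∧
    -((1 - 2*α)^2 * (2 * Real.log 2 * (1 - muF α) - 1)) / 4 < 0 := by
  have hρ : 0 < (1 - 2 * α) ^ 2 := by
    have : 0 < 1 - 2 * α := by linarith
    positivity
  refine ⟨fun ε hε => ?_, ?_⟩
  swap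
  · have := mul_pos hρ (sub_pos.2 hμ)
    linarith
  set θ := Real.arccos (1 - 2 * α) / Real.pi with hθ
  have hpi := Real.pi_pos
  have hθ2 : θ < 1 / 2 := by
    rw [hθ, div_lt_iff₀ hpi]
    have := Real.arccos_lt_pi_div_two.2 (by linarith : 0 < 1 - 2 * α)
    linarith
  -- The smoothing parameter is chosen so that smoothing costs at most `ε / 4`.
  obtain ⟨η, hη0, hη1, hηε⟩ : ∃ η : ℝ, 0 < η ∧ η < 1 / 2 ∧ smoothEnt η θ < smoothEnt 0 θ + ε / 2 := by
    have hc : Continuous (fun η => smoothEnt η θ) := by unfold smoothEnt; fun_prop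
    have h1 : ∀ᶠ η in nhdsWithin (0:ℝ) (Set.Ioi 0), smoothEnt η θ < smoothEnt 0 θ + ε / 2 :=
      (hc.continuousAt.tendsto.eventually (gt_mem_nhds (by linarith))).filter_mono nhdsWithin_le_nhds
    have h2 : ∀ᶠ η in nhdsWithin (0:ℝ) (Set.Ioi 0), η < 1 / 2 :=
      (gt_mem_nhds (by norm_num)).filter_mono nhdsWithin_le_nhds
    obtain ⟨η, ⟨ha, hb⟩, hc⟩ := ((h1.and h2).and self_mem_nhdsWithin).exists
    exact ⟨η, hc, hb, ha⟩
  obtain ⟨t, ht, hbound⟩ := exists_noise_bound hα0 hα1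
  have hsmall : ∀ᶠ m in Filter.atTop, t m < 1 / 2 := ht.eventually (gt_mem_nhds hθ2)
  have hent : ∀ᶠ m in Filter.atTop, smoothEnt η (t m) < smoothEnt η θ + ε / 2 :=
    ((continuous_smoothEnt η).continuousAt.tendsto.comp ht).eventually (gt_mem_nhds (by linarith))
  -- The accumulated error is a convergent series times `ret m → 0`.
  have hsum : Summable (fun r : ℕ => (1 / √(r + 1 : ℝ)) ^ 3) := by
    have h := (summable_nat_add_iff 1).2
      (Real.summable_one_div_nat_rpow.2 (by norm_num : (1:ℝ) < 3 / 2))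
    refine h.congr fun r => ?_
    have : (0:ℝ) ≤ r + 1 := by positivity
    rw [one_div_pow, Real.sqrt_eq_rpow, ← Real.rpow_natCast, ← Real.rpow_mul this]
    push_cast
    norm_num
  have herr : ∀ᶠ m in Filter.atTop, 1 / 3 / η ^ 3 * ((∑' r : ℕ, (1 / √(r + 1 : ℝ)) ^ 3) * ret m) < ε / 4 := by
    have := (tendsto_ret.const_mul (∑' r : ℕ, (1 / √(r + 1 : ℝ)) ^ 3)).const_mul (1 / 3 / η ^ 3)
    rw [mul_zero, mul_zero] at this
    exact this.eventually (gt_mem_nhds (by linarith))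
  obtain ⟨M, hM⟩ := Filter.eventually_atTop.1 ((hsmall.and hent).and (herr.and (Filter.eventually_gt_atTop 0)))
  refine ⟨2 * M + 1, fun n hn hodd => ?_⟩
  rw [noisySMSE_dic n α hodd.pos]
  obtain ⟨m, hm⟩ := id hodd
  subst hm
  obtain ⟨⟨ht1, ht2⟩, he, hm0⟩ := hM m (by omega)
  have hmain := noisySMSE_maj_le hα0 hα1.le hη0 hη1 m
  have hb := hbound m hm0
  have hP0 : 0 ≤ (∑ y : Fin (2 * m + 1) → Bool, ∑ x, bsc (2 * m + 1) α y x *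
      (if (m < hw x ↔ m < hw y) then (0:ℝ) else 1)) / 2 ^ (2 * m + 1) := by
    refine div_nonneg (Finset.sum_nonneg fun y _ => Finset.sum_nonneg fun x _ => ?_) (by positivity)
    refine mul_nonneg (bsc_nonneg hα0 (by linarith) y x) ?_
    split_ifs <;> norm_num
  have hmono := smoothEnt_mono hη0.le hη1.le hP0 hb ht1.le
  have hpart : ∑ r ∈ range (2 * m + 1), (1 / √(r + 1 : ℝ)) ^ 3 ≤ ∑' r : ℕ, (1 / √(r + 1 : ℝ)) ^ 3 :=
    hsum.sum_le_tsum _ (fun r _ => by positivity)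
  have herr2 : 1 / 3 / η ^ 3 * ((∑ r ∈ range (2 * m + 1), (1 / √(r + 1 : ℝ)) ^ 3) * ret m) ≤
      1 / 3 / η ^ 3 * ((∑' r : ℕ, (1 / √(r + 1 : ℝ)) ^ 3) * ret m) := by
    have := (ret_pos m).le
    gcongr
  have hmu := log_two_mul_muF α
  rw [← hθ] at hmu
  -- Since the information `1 - μ(α)` is nonnegative, the factor `(1 - 2α)² ≤ 1` only weakens the bound.
  have hlast : (1 - 2 * α) ^ 2 * (2 * Real.log 2 * (1 - muF α)) ≤ 2 * Real.log 2 * (1 - muF α) :=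
    mul_le_of_le_one_left (by linarith) (by nlinarith)
  nlinarith
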